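/- arXiv:1107.4879 — 4 statements merged into one kernel-verified Lean document; each statement's English description precedes it below -/
import Mathlib

section
/- If a graph G has a perfect matching, then for every positive integer k, G has a subgraph that is simultaneously spanning and a maximum k-edge-colorable subgraph of G. -/
/-!
Fix a matching `M`. Among the maximum `k`-edge-colorable subgraphs choose one, `H`, that shares as
many edges as possible with `M`. Suppose that `H` misses a vertex `v` of `M`; let `v u` be the edge
of `M` at `v` and fix a color `i` (this uses `k > 0`). Delete from `H` the edge of color `i` at `u`,
if there is one, and add `v u` with color `i`. The result is properly colored and has at least as
many edges, hence is again maximum. The deleted edge is not in `M`, because `v u` is the only edge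
of `M` at `u`, so the new subgraph has one more edge in common with `M`: a contradiction.
-/

open SimpleGraph

variable {V : Type*}

/-- A subgraph is spanning if every vertex of the host graph has a neighbor in it. -/
def SpanningSub {G : SimpleGraph V} (H : G.Subgraph) : Prop :=
  ∀ v : V, ∃ w : V, H.Adj v w

/-- A subgraph is `k`-edge-colorable if its edges can be properly colored with `k` colors,
i.e. its edge set can be partitioned into `k` matchings. -/
def EdgeColorable {G : SimpleGraph V} (H : G.Subgraph) (k : ℕ) : Prop :=
  ∃ f : H.edgeSet → Fin k, ∀ e₁ e₂ : H.edgeSet, e₁ ≠ e₂ →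
    (∃ v : V, v ∈ (e₁ : Sym2 V) ∧ v ∈ (e₂ : Sym2 V)) → f e₁ ≠ f e₂

/-- A maximum `k`-edge-colorable subgraph: `k`-edge-colorable with as many edges as possible. -/
def MaximumEdgeColorable {G : SimpleGraph V} (H : G.Subgraph) (k : ℕ) : Prop :=
  EdgeColorable H k ∧
    ∀ H' : G.Subgraph, EdgeColorable H' k → H'.edgeSet.ncard ≤ H.edgeSet.ncard

/-- `sp G`: the least `k` such that `G` has a spanning `k`-edge-colorable subgraph. -/
noncomputable def sp (G : SimpleGraph V) : ℕ :=
  sInf {k | ∃ H : G.Subgraph, SpanningSub H ∧ EdgeColorable H k}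

/-- Maximum degree. -/
noncomputable def maxDeg (G : SimpleGraph V) : ℕ :=
  sSup (Set.range fun v : V => (G.neighborSet v).ncard)

/-- Minimum degree. -/
noncomputable def minDeg (G : SimpleGraph V) : ℕ :=
  sInf (Set.range fun v : V => (G.neighborSet v).ncard)

/-- Matching number. -/
noncomputable def matchNum (G : SimpleGraph V) : ℕ :=
  sSup {n | ∃ M : G.Subgraph, M.IsMatching ∧ M.edgeSet.ncard = n}

/-- The coloring `c` is proper on the edge set `E`: distinct edges of `E` that share a vertex get
different colors. The coloring is a total function on `Sym2 V`, of which only the values on `E`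
matter, so that it need not be transported when `E` changes. -/
def IsProperEdgeColoring {α : Type*} (E : Set (Sym2 V)) (c : Sym2 V → α) : Prop :=
  E.Pairwise fun e₁ e₂ ↦ (∃ v, v ∈ e₁ ∧ v ∈ e₂) → c e₁ ≠ c e₂

lemma edgeColorable_iff_exists_isProperEdgeColoring {G : SimpleGraph V} {H : G.Subgraph} {k : ℕ}
    (hk : 0 < k) :
    EdgeColorable H k ↔ ∃ c : Sym2 V → Fin k, IsProperEdgeColoring H.edgeSet c := by
  have : Nonempty (Fin k) := ⟨⟨0, hk⟩⟩
  have extend : Function.Surjective fun (c : Sym2 V → Fin k) (e : H.edgeSet) ↦ c e :=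
    Subtype.val_injective.surjective_comp_right
  rw [EdgeColorable, extend.exists]
  simp only [IsProperEdgeColoring, Set.Pairwise, Subtype.forall, ne_eq, Subtype.mk.injEq]

lemma edgeColorable_bot (G : SimpleGraph V) (k : ℕ) : EdgeColorable (⊥ : G.Subgraph) k := by
  have : IsEmpty (⊥ : G.Subgraph).edgeSet := by simp
  exact ⟨isEmptyElim, isEmptyElim⟩

lemma exists_subgraph_edgeSet_eq {G : SimpleGraph V} {E : Set (Sym2 V)} (hE : E ⊆ G.edgeSet) :
    ∃ H : G.Subgraph, H.edgeSet = E := by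
  have no_loops : Disjoint E Sym2.diagSet :=
    Set.disjoint_left.2 fun _ he ↦ G.edgeSet_subset_compl_diagSet (hE he)
  refine ⟨toSubgraph (fromEdgeSet E) ((fromEdgeSet_le G).2 (Set.sdiff_subset.trans hE)), ?_⟩
  exact (edgeSet_fromEdgeSet E).trans no_loops.sdiff_eq_left

lemma eq_of_mem_edgeSet_of_isMatching {G : SimpleGraph V} {M : G.Subgraph} (hM : M.IsMatching)
    {u : V} {e₁ e₂ : Sym2 V} (he₁ : e₁ ∈ M.edgeSet) (he₂ : e₂ ∈ M.edgeSet) (hu₁ : u ∈ e₁)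
    (hu₂ : u ∈ e₂) : e₁ = e₂ := by
  obtain ⟨v, rfl⟩ := hu₁
  obtain ⟨w, rfl⟩ := hu₂
  exact congrArg (s(u, ·)) (hM.eq_of_adj_left he₁ he₂)

section Exchange

variable {α : Type*} {E S : Set (Sym2 V)} {c : Sym2 V → α} {u v : V} {i : α}

/-- The edges of `E` at `u` that have color `i`; at most one if `c` is proper on `E`. -/
def edgesOfColorAt (E : Set (Sym2 V)) (c : Sym2 V → α) (u : V) (i : α) : Set (Sym2 V) :=
  {e ∈ E | u ∈ e ∧ c e = i}

/-- The edge set obtained from `E` by inserting `s(v, u)` and deleting the edges at `u` that would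
conflict with it if it received color `i`. The vertex `v` is meant to be isolated in `E`, so no
conflict arises there. -/
def edgeExchange (E : Set (Sym2 V)) (c : Sym2 V → α) (v u : V) (i : α) : Set (Sym2 V) :=
  insert s(v, u) (E \ edgesOfColorAt E c u i)

lemma edgeExchange_subset_insert : edgeExchange E c v u i ⊆ insert s(v, u) E :=
  Set.insert_subset_insert Set.sdiff_subset

lemma inter_ssubset_edgeExchange_inter (hvu : s(v, u) ∈ S) (hvuE : s(v, u) ∉ E)
    (hu : ∀ e ∈ E ∩ S, u ∉ e) : E ∩ S ⊂ edgeExchange E c v u i ∩ S := by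
  refine Set.ssubset_iff_exists.2
    ⟨fun e he ↦ ⟨.inr ⟨he.1, fun hei ↦ hu e he hei.2.1⟩, he.2⟩, s(v, u), ?_⟩
  exact ⟨⟨Set.mem_insert _ _, hvu⟩, fun h ↦ hvuE h.1⟩

namespace IsProperEdgeColoring

lemma mono {E' : Set (Sym2 V)} (hc : IsProperEdgeColoring E c) (h : E' ⊆ E) :
    IsProperEdgeColoring E' c :=
  Set.Pairwise.mono h hc

lemma insert_update [DecidableEq V] (hc : IsProperEdgeColoring E c) {e₀ : Sym2 V}
    (h : ∀ e ∈ E, c e = i → ∀ w ∈ e₀, w ∉ e) :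
    IsProperEdgeColoring (insert e₀ E) (Function.update c e₀ i) := by
  rintro e₁ he₁ e₂ he₂ hne ⟨w, hw₁, hw₂⟩
  rcases eq_or_ne e₁ e₀ with rfl | hne₁
  · rw [Function.update_self, Function.update_of_ne hne.symm]
    exact fun hi ↦ h e₂ (he₂.resolve_left hne.symm) hi.symm w hw₁ hw₂
  rcases eq_or_ne e₂ e₀ with rfl | hne₂
  · rw [Function.update_self, Function.update_of_ne hne]
    exact fun hi ↦ h e₁ (he₁.resolve_left hne) hi w hw₂ hw₁
  rw [Function.update_of_ne hne₁, Function.update_of_ne hne₂]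
  exact hc (he₁.resolve_left hne₁) (he₂.resolve_left hne₂) hne ⟨w, hw₁, hw₂⟩

lemma update_edgeExchange [DecidableEq V] (hc : IsProperEdgeColoring E c) (hv : ∀ e ∈ E, v ∉ e) :
    IsProperEdgeColoring (edgeExchange E c v u i) (Function.update c s(v, u) i) := by
  refine (hc.mono Set.sdiff_subset).insert_update fun e he hi w hw hwe ↦ ?_
  rcases Sym2.mem_iff.1 hw with rfl | rfl
  · exact hv e he.1 hwe
  · exact he.2 ⟨he.1, hwe, hi⟩

lemma subsingleton_edgesOfColorAt (hc : IsProperEdgeColoring E c) :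
    (edgesOfColorAt E c u i).Subsingleton :=
  fun _ h₁ _ h₂ ↦ hc.eq h₁.1 h₂.1 fun h ↦
    h ⟨u, h₁.2.1, h₂.2.1⟩ (h₁.2.2.trans h₂.2.2.symm)

lemma ncard_le_ncard_edgeExchange (hc : IsProperEdgeColoring E c) (hE : E.Finite)
    (hvuE : s(v, u) ∉ E) : E.ncard ≤ (edgeExchange E c v u i).ncard := by
  have hsub : (edgesOfColorAt E c u i).Subsingleton := hc.subsingleton_edgesOfColorAt
  have : Finite (edgesOfColorAt E c u i) := hsub.finite
  calc E.ncard
    _ ≤ (E \ edgesOfColorAt E c u i).ncard + (edgesOfColorAt E c u i).ncard :=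
      Set.ncard_le_ncard_sdiff_add_ncard _ _
    _ ≤ (E \ edgesOfColorAt E c u i).ncard + 1 := by
      gcongr
      exact Set.ncard_le_one_iff_subsingleton.2 hsub
    _ = (edgeExchange E c v u i).ncard :=
      (Set.ncard_insert_of_notMem (fun h ↦ hvuE h.1) hE.sdiff).symm

end IsProperEdgeColoring

end Exchange

section Subgraph

variable {G : SimpleGraph V} {k : ℕ}

lemma exists_edgeColorable_ncard_inter_lt {H M : G.Subgraph} (hH : EdgeColorable H k)
    (hfin : H.edgeSet.Finite) (hk : 0 < k) (hM : M.IsMatching) {v : V} (hvM : v ∈ M.verts)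
    (hvH : v ∉ H.support) :
    ∃ H' : G.Subgraph, EdgeColorable H' k ∧ H.edgeSet.ncard ≤ H'.edgeSet.ncard ∧
      (H.edgeSet ∩ M.edgeSet).ncard < (H'.edgeSet ∩ M.edgeSet).ncard := by
  classical
  obtain ⟨c, hc⟩ := (edgeColorable_iff_exists_isProperEdgeColoring hk).1 hH
  obtain ⟨u, hvu, -⟩ := hM hvM
  have hv : ∀ e ∈ H.edgeSet, v ∉ e := by
    rintro _ he ⟨w, rfl⟩
    exact hvH ⟨w, he⟩
  have hvuH : s(v, u) ∉ H.edgeSet := fun h ↦ hv _ h (Sym2.mem_mk_left v u)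
  have hu : ∀ e ∈ H.edgeSet ∩ M.edgeSet, u ∉ e := fun e he hue ↦
    hvuH (eq_of_mem_edgeSet_of_isMatching hM he.2 hvu hue (Sym2.mem_mk_right v u) ▸ he.1)
  let i : Fin k := ⟨0, hk⟩
  have hsub : edgeExchange H.edgeSet c v u i ⊆ insert s(v, u) H.edgeSet :=
    edgeExchange_subset_insert
  obtain ⟨H', hH'⟩ := exists_subgraph_edgeSet_eq
    (hsub.trans (Set.insert_subset (M.edgeSet_subset hvu) H.edgeSet_subset))
  have hcol : EdgeColorable H' k :=
    (edgeColorable_iff_exists_isProperEdgeColoring hk).2 ⟨_, hH' ▸ hc.update_edgeExchange hv⟩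
  refine ⟨H', hcol, ?_⟩
  rw [hH']
  exact ⟨hc.ncard_le_ncard_edgeExchange hfin hvuH, Set.ncard_lt_ncard
    (inter_ssubset_edgeExchange_inter hvu hvuH hu) (((hfin.insert _).subset hsub).inter_of_left _)⟩

lemma exists_maximumEdgeColorable_forall_le {β : Type*} [LinearOrder β] (hG : G.edgeSet.Finite)
    (k : ℕ) (f : Set (Sym2 V) → β) :
    ∃ H : G.Subgraph, MaximumEdgeColorable H k ∧
      ∀ H' : G.Subgraph, EdgeColorable H' k → H.edgeSet.ncard ≤ H'.edgeSet.ncard →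
        f H'.edgeSet ≤ f H.edgeSet := by
  have hfin : (Subgraph.edgeSet '' {H : G.Subgraph | EdgeColorable H k}).Finite :=
    hG.finite_subsets.subset (Set.image_subset_iff.2 fun H _ ↦ H.edgeSet_subset)
  obtain ⟨_, ⟨H, hH, rfl⟩, hmax⟩ := Set.exists_max_image _ (fun E ↦ toLex (E.ncard, f E)) hfin
    ⟨_, ⊥, edgeColorable_bot G k, rfl⟩
  have hcard (H' : G.Subgraph) (hH' : EdgeColorable H' k) :
      H'.edgeSet.ncard ≤ H.edgeSet.ncard :=
    Prod.Lex.monotone_fst _ _ (hmax _ ⟨H', hH', rfl⟩)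
  exact ⟨H, ⟨hH, hcard⟩, fun H' hH' hle ↦
    (Prod.Lex.toLex_le_toLex'.1 (hmax _ ⟨H', hH', rfl⟩)).2 ((hcard H' hH').antisymm hle)⟩

theorem perfectMatching_spanning_maximum_k_edge_colorable_general (hG : G.edgeSet.Finite)
    {M : G.Subgraph} (hM : M.IsMatching) (hk : 0 < k) :
    ∃ H : G.Subgraph, M.verts ⊆ H.support ∧ MaximumEdgeColorable H k := by
  obtain ⟨H, hmax, hinter⟩ :=
    exists_maximumEdgeColorable_forall_le hG k fun E ↦ (E ∩ M.edgeSet).ncard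
  refine ⟨H, fun v hvM ↦ ?_, hmax⟩
  by_contra hvH
  obtain ⟨H', hH', hle, hlt⟩ := exists_edgeColorable_ncard_inter_lt hmax.1
    (hG.subset H.edgeSet_subset) hk hM hvM hvH
  exact (hinter H' hH' hle).not_gt hlt

end Subgraph

/-- If a graph has a perfect matching, then for every positive integer `k` it has a subgraph
that is simultaneously spanning and a maximum `k`-edge-colorable subgraph. -/
theorem perfectMatching_spanning_maximum_k_edge_colorable
    {V : Type*} [Fintype V] (G : SimpleGraph V)
    (hpm : ∃ M : G.Subgraph, M.IsPerfectMatching) (k : ℕ) (hk : 0 < k) :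
    ∃ H : G.Subgraph, SpanningSub H ∧ MaximumEdgeColorable H k := by
  obtain ⟨M, hM, hspan⟩ := hpm
  obtain ⟨H, hMH, hH⟩ :=
    perfectMatching_spanning_maximum_k_edge_colorable_general G.edgeSet.toFinite hM hk
  exact ⟨H, fun v ↦ hMH (hspan v), hH⟩
end

section
/- If G is a connected graph without isolated vertices satisfying sp(G) = Δ(G), then G is either an odd cycle or a tree. -/
/-!
Any spanning subgraph `H` of `G` gives `sp G ≤ Δ(H)`: an inclusion-minimal one contained in `H` is
a star forest, and a star forest is edge-colorable with as many colors as its maximum degree.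

Suppose that the connected graph `G` contains a cycle `C`. Sending each vertex of `C` to its
successor on `C`, and every other vertex to a neighbor closer to a fixed vertex of `C`, gives a map
`f` along the edges of `G` with `f (f v) ≠ v` for all `v`, whose periodic points are the vertices of
`C`. The edges from `u` to `f u` with `u` not periodic form an acyclic digraph, which therefore has
a kernel: a set `S` such that `v ∈ S` exactly when no non-periodic `u` with `f u = v` is in `S`. The
edges `v (f v)` with `v ∈ S` cover all vertices. A vertex `v ∈ S` has degree at most `2` there, its
only possible neighbors being `f v` and its predecessor on `C`, while a vertex `v ∉ S` loses the
edge to `f v`. So `sp G < Δ(G)` as soon as `Δ(G) ≥ 3`.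

If `Δ(G) ≤ 2`, then connectedness forces `G = C`, and an even cycle has a perfect matching, so that
`sp G ≤ 1 < Δ(G)` unless `C` is odd.
-/

open SimpleGraph

variable {V : Type*}

section

variable {G : SimpleGraph V}

/-! ### Star forests -/

/-- A star forest: every edge has an end that lies on no other edge. Isolated vertices are
allowed. -/
def IsStarForest (H : G.Subgraph) : Prop :=
  ∀ e ∈ H.edgeSet, ∃ l ∈ e, ∀ e' ∈ H.edgeSet, l ∈ e' → e' = e

theorem isStarForest_of_minimal_spanningSub {H : G.Subgraph} (hH : Minimal SpanningSub H) :
    IsStarForest H := by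
  intro e he
  by_contra! hcon
  have hspan : SpanningSub (H.deleteEdges {e}) := by
    intro v
    obtain ⟨w, hw⟩ := hH.prop v
    by_cases hvw : s(v, w) = e
    · obtain ⟨_, hx, ⟨x, rfl⟩, hne⟩ := hcon v (hvw ▸ Sym2.mem_mk_left v w)
      exact ⟨x, (Subgraph.deleteEdges_adj _ _ _).2 ⟨hx, hne⟩⟩
    · exact ⟨w, (Subgraph.deleteEdges_adj _ _ _).2 ⟨hw, hvw⟩⟩
  have hle : H ≤ H.deleteEdges {e} := hH.le_of_le hspan (Subgraph.deleteEdges_le _)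
  have hdel := Subgraph.edgeSet_mono hle he
  induction e with
  | h x y => exact ((Subgraph.deleteEdges_adj _ _ _).1 hdel).2 rfl

theorem IsStarForest.edgeColorable {H : G.Subgraph} (hH : IsStarForest H) {k : ℕ}
    (hdeg : ∀ v, (H.neighborSet v).encard ≤ k) : EdgeColorable H k := by
  -- Two edges can only meet at their centers, so it suffices to number the neighbors of each vertex
  -- and to color the edge between a center `c` and a leaf `l` with the number of `l` at `c`.
  have hnum : ∀ v, ∃ g : V → ℕ, (∀ w ∈ H.neighborSet v, g w < k) ∧
      Set.InjOn g (H.neighborSet v) := fun v ↦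
    (Set.finite_of_encard_le_coe (hdeg v)).exists_injOn_of_encard_le (t := Set.Iio k)
      (by simpa [Set.encard_eq_coe_toFinset_card] using hdeg v)
  choose g hgk hginj using hnum
  have hstar : ∀ e : H.edgeSet, ∃ l c, (e : Sym2 V) = s(l, c) ∧ H.Adj c l ∧
      ∀ e' : H.edgeSet, l ∈ (e' : Sym2 V) → e' = e := by
    rintro ⟨e, he⟩
    obtain ⟨l, ⟨c, rfl⟩, hl⟩ := hH e he
    exact ⟨l, c, rfl, H.adj_symm he, fun e' hle' ↦ Subtype.ext (hl e' e'.2 hle')⟩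
  choose l c he hadj hl using hstar
  refine ⟨fun e ↦ ⟨g (c e) (l e), hgk _ _ (hadj e)⟩, ?_⟩
  rintro e₁ e₂ hne ⟨v, hv₁, hv₂⟩ hcol
  have hcenter : ∀ e e' : H.edgeSet, e ≠ e' → v ∈ (e : Sym2 V) → v ∈ (e' : Sym2 V) → c e = v := by
    intro e e' hne hv hv'
    rw [he e, Sym2.mem_iff] at hv
    exact (hv.resolve_left fun h ↦ hne (hl e e' (h ▸ hv')).symm).symm
  have hc₁ : c e₁ = v := hcenter e₁ e₂ hne hv₁ hv₂
  have hc₂ : c e₂ = v := hcenter e₂ e₁ hne.symm hv₂ hv₁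
  have hleaf : l e₁ = l e₂ := by
    refine hginj v (hc₁ ▸ hadj e₁) (hc₂ ▸ hadj e₂) ?_
    simpa only [hc₁, hc₂] using Fin.val_eq_of_eq hcol
  exact hne (Subtype.ext (by rw [he e₁, he e₂, hleaf, hc₁, hc₂]))

theorem sp_le_of_spanningSub [Finite V] {H : G.Subgraph} (hH : SpanningSub H) {k : ℕ}
    (hdeg : ∀ v, (H.neighborSet v).ncard ≤ k) : sp G ≤ k := by
  obtain ⟨H', hle, hmin⟩ := exists_minimal_le_of_wellFoundedLT SpanningSub H hH
  refine Nat.sInf_le ⟨H', hmin.prop,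
    (isStarForest_of_minimal_spanningSub hmin).edgeColorable fun v ↦ ?_⟩
  calc (H'.neighborSet v).encard ≤ (H.neighborSet v).encard :=
        Set.encard_le_encard (Subgraph.neighborSet_subset_of_subgraph hle v)
    _ = (H.neighborSet v).ncard := (Set.toFinite _).cast_ncard_eq.symm
    _ ≤ k := mod_cast hdeg v

/-! ### Subgraphs given by a map along edges -/

/-- The subgraph of `G` on all vertices whose edges are the `v (f v)` for `v ∈ S`, where `f` maps
each vertex to a neighbor. -/
def functionalSubgraph {f : V → V} (hf : ∀ v, G.Adj v (f v)) (S : Set V) : G.Subgraph where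
  verts := Set.univ
  Adj v w := v ∈ S ∧ f v = w ∨ w ∈ S ∧ f w = v
  adj_sub := by
    rintro v w (⟨-, rfl⟩ | ⟨-, rfl⟩)
    · exact hf v
    · exact (hf w).symm
  edge_vert _ := Set.mem_univ _
  symm := ⟨fun _ _ ↦ Or.symm⟩

section FunctionalSubgraph

variable {f : V → V} {hf : ∀ v, G.Adj v (f v)} {S : Set V} {v : V}

theorem spanningSub_functionalSubgraph (hS : ∀ v ∉ S, ∃ u ∈ S, f u = v) :
    SpanningSub (functionalSubgraph hf S) := by
  intro v
  by_cases hv : v ∈ S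
  · exact ⟨f v, Or.inl ⟨hv, rfl⟩⟩
  · obtain ⟨u, hu⟩ := hS v hv
    exact ⟨u, Or.inr hu⟩

theorem neighborSet_functionalSubgraph_of_mem (hv : v ∈ S) :
    (functionalSubgraph hf S).neighborSet v = insert (f v) {u ∈ S | f u = v} := by
  ext w
  change v ∈ S ∧ f v = w ∨ w ∈ S ∧ f w = v ↔ w = f v ∨ w ∈ S ∧ f w = v
  simp only [hv, true_and, eq_comm]

theorem neighborSet_functionalSubgraph_of_notMem (hv : v ∉ S) :
    (functionalSubgraph hf S).neighborSet v = {u ∈ S | f u = v} := by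
  ext w
  change v ∈ S ∧ f v = w ∨ w ∈ S ∧ f w = v ↔ w ∈ S ∧ f w = v
  simp only [hv, false_and, false_or]

end FunctionalSubgraph

theorem sp_le_one_of_injective_of_coloring [Finite V] {f : V → V} (hf : ∀ v, G.Adj v (f v))
    (hinj : Function.Injective f) (c : G.Coloring Bool) : sp G ≤ 1 := by
  let S : Set V := {v | c v}
  have hmem : ∀ v, f v ∈ S ↔ v ∉ S := fun v ↦ by
    have := c.valid (hf v)
    grind
  refine sp_le_of_spanningSub (H := functionalSubgraph hf S)
    (spanningSub_functionalSubgraph fun v hv ↦ ?_) fun v ↦ ?_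
  · obtain ⟨u, rfl⟩ := Finite.surjective_of_injective hinj v
    exact ⟨u, by_contra fun hu ↦ hv ((hmem u).2 hu), rfl⟩
  · by_cases hv : v ∈ S
    · have hpred : {u ∈ S | f u = v} = ∅ := by
        rw [Set.sep_eq_empty_iff_mem_false]
        rintro u hu rfl
        exact (hmem u).1 hv hu
      rw [neighborSet_functionalSubgraph_of_mem hv, hpred, insert_empty_eq, Set.ncard_singleton]
    · rw [neighborSet_functionalSubgraph_of_notMem hv, Set.ncard_le_one_iff]
      exact fun ha hb ↦ hinj (ha.2.trans hb.2.symm)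

/-! ### Kernels -/

/-- A kernel of the digraph `r`: a set of pairwise non-adjacent vertices in which every other vertex
has a neighbor. The arcs are read backwards, so that `v` is dominated by the `u` with `r u v`. -/
def IsKernel {α : Type*} (r : α → α → Prop) (S : Set α) : Prop :=
  ∀ v, v ∈ S ↔ ∀ u, r u v → u ∉ S

theorem exists_isKernel_of_wellFounded {α : Type*} {r : α → α → Prop} (hr : WellFounded r) :
    ∃ S, IsKernel r S := by
  refine ⟨{v | hr.fix (C := fun _ ↦ Prop) (fun v ih ↦ ∀ u, ∀ h : r u v, ¬ ih u h) v}, fun v ↦ ?_⟩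
  change hr.fix (C := fun _ ↦ Prop) _ v ↔ _
  rw [hr.fix_eq]
  rfl

open Function in
theorem wellFounded_notMem_periodicPts_and_apply_eq {α : Type*} [Finite α] (f : α → α) :
    WellFounded fun u v ↦ u ∉ periodicPts f ∧ f u = v := by
  let r : α → α → Prop := fun u v ↦ u ∉ periodicPts f ∧ f u = v
  have hiter : ∀ u v, Relation.TransGen r u v → u ∉ periodicPts f ∧ ∃ n > 0, f^[n] u = v := by
    intro u v h
    induction h with
    | single h => exact ⟨h.1, 1, one_pos, h.2⟩
    | tail _ h ih =>
      obtain ⟨hu, n, -, hn⟩ := ih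
      exact ⟨hu, n + 1, n.succ_pos, by rw [iterate_succ_apply', hn, h.2]⟩
  have : Std.Irrefl (Relation.TransGen r) := ⟨fun u h ↦
    have ⟨hu, n, hn, hper⟩ := hiter u u h
    hu (mk_mem_periodicPts hn hper)⟩
  have hsub : Subrelation r (Relation.TransGen r) := Relation.TransGen.single
  exact hsub.wf (Finite.wellFounded_of_trans_of_irrefl _)

/-! ### Nonbacktracking maps -/

/-- A map moving every vertex of `G` along an edge, such that applying it twice never returns to
the starting vertex: an orientation of some of the edges of `G` with all outdegrees equal to `1`. -/
structure IsNonbacktracking (G : SimpleGraph V) (f : V → V) : Prop where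
  adj : ∀ v, G.Adj v (f v)
  apply_apply_ne : ∀ v, f (f v) ≠ v

theorem ncard_neighborSet_le_maxDeg [Finite V] (G : SimpleGraph V) (v : V) :
    (G.neighborSet v).ncard ≤ maxDeg G :=
  le_csSup (Set.finite_range _).bddAbove ⟨v, rfl⟩

namespace IsNonbacktracking

variable {f : V → V}

theorem two_le_maxDeg [Finite V] [Nonempty V] (hf : IsNonbacktracking G f) : 2 ≤ maxDeg G := by
  let v : V := Classical.arbitrary V
  have hsub : {v, f (f v)} ⊆ G.neighborSet (f v) :=
    Set.pair_subset (hf.adj v).symm (hf.adj (f v))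
  calc 2 = Set.ncard {v, f (f v)} := (Set.ncard_pair (hf.apply_apply_ne v).symm).symm
    _ ≤ (G.neighborSet (f v)).ncard := Set.ncard_le_ncard hsub
    _ ≤ maxDeg G := ncard_neighborSet_le_maxDeg G (f v)

theorem ncard_neighborSet_functionalSubgraph_lt (hf : IsNonbacktracking G f) {S : Set V}
    {v : V} (hfin : (G.neighborSet v).Finite) (hv : v ∉ S) :
    ((functionalSubgraph hf.adj S).neighborSet v).ncard < (G.neighborSet v).ncard := by
  refine Set.ncard_lt_ncard (Set.ssubset_iff_of_subset (Subgraph.neighborSet_subset _ v) |>.2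
    ⟨f v, hf.adj v, fun h ↦ ?_⟩) hfin
  rw [neighborSet_functionalSubgraph_of_notMem hv] at h
  exact hf.apply_apply_ne v h.2

theorem sp_lt_maxDeg [Finite V] (hf : IsNonbacktracking G f) (hΔ : 3 ≤ maxDeg G) :
    sp G < maxDeg G := by
  obtain ⟨S, hS⟩ :=
    exists_isKernel_of_wellFounded (wellFounded_notMem_periodicPts_and_apply_eq f)
  have hspan : SpanningSub (functionalSubgraph hf.adj S) := by
    refine spanningSub_functionalSubgraph fun v hv ↦ ?_
    rw [hS v] at hv
    push Not at hv
    obtain ⟨u, ⟨-, hu⟩, huS⟩ := hv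
    exact ⟨u, huS, hu⟩
  have hpred : ∀ v ∈ S, {u ∈ S | f u = v}.Subsingleton := by
    intro v hv
    have hper : ∀ u ∈ S, f u = v → u ∈ f.periodicPts := fun u hu huv ↦
      by_contra fun h ↦ (hS v).1 hv u ⟨h, huv⟩ hu
    exact fun a ha b hb ↦ f.bijOn_periodicPts.injOn (hper a ha.1 ha.2) (hper b hb.1 hb.2)
      (ha.2.trans hb.2.symm)
  refine Nat.lt_of_le_sub_one (by lia) (sp_le_of_spanningSub hspan fun v ↦ ?_)
  by_cases hv : v ∈ S
  · rw [neighborSet_functionalSubgraph_of_mem hv]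
    have := Set.ncard_insert_le (f v) {u ∈ S | f u = v}
    have := Set.ncard_le_one_iff_subsingleton.2 (hpred v hv)
    lia
  · have hlt := hf.ncard_neighborSet_functionalSubgraph_lt (Set.toFinite _) hv
    exact Nat.le_sub_one_of_lt (hlt.trans_le (ncard_neighborSet_le_maxDeg G v))

end IsNonbacktracking

/-! ### Copies in connected graphs -/

theorem exists_adj_dist_lt (hG : G.Preconnected) {v r : V} (hne : v ≠ r) :
    ∃ w, G.Adj v w ∧ G.dist w r < G.dist v r := by
  obtain ⟨p, hp⟩ := (hG v r).exists_walk_length_eq_dist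
  cases p with
  | nil => exact absurd rfl hne
  | cons h q => exact ⟨_, h, hp ▸ Nat.lt_succ_of_le (dist_le q)⟩

variable {W : Type*} {A : SimpleGraph W}

theorem exists_isNonbacktracking_of_copy [Nonempty W] (hG : G.Preconnected) (φ : Copy A G)
    {g : W → W} (hg : IsNonbacktracking A g) : ∃ f, IsNonbacktracking G f := by
  let r : V := φ (Classical.arbitrary W)
  have : Nonempty V := ⟨r⟩
  choose! t hadj hdist using fun v (hv : v ≠ r) ↦ exists_adj_dist_lt hG hv
  have hr : ∀ v ∉ Set.range φ, v ≠ r := fun v hv h ↦ hv ⟨_, h.symm⟩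
  let f : V → V := Function.extend φ (φ ∘ g) t
  have hf : ∀ a, f (φ a) = φ (g a) := φ.injective.extend_apply _ _
  have hf' : ∀ v ∉ Set.range φ, f v = t v := fun v hv ↦ Function.extend_apply' _ _ v hv
  refine ⟨f, fun v ↦ ?_, fun v ↦ ?_⟩ <;> by_cases hv : v ∈ Set.range φ
  · obtain ⟨a, rfl⟩ := hv
    exact hf a ▸ φ.toHom.map_adj (hg.adj a)
  · exact hf' v hv ▸ hadj v (hr v hv)
  · obtain ⟨a, rfl⟩ := hv
    rw [hf, hf]
    exact φ.injective.ne (hg.apply_apply_ne a)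
  · rw [hf' v hv]
    intro h
    by_cases htv : t v ∈ Set.range φ
    · obtain ⟨a, ha⟩ := htv
      exact hv ⟨g a, by rw [← hf, ha, h]⟩
    · rw [hf' _ htv] at h
      have h₁ := hdist v (hr v hv)
      have h₂ := hdist (t v) (hr _ htv)
      rw [h] at h₂
      exact h₁.asymm h₂

theorem image_neighborSet_eq_of_ncard_le (φ : Copy A G) {a : W}
    (hfin : (G.neighborSet (φ a)).Finite)
    (hdeg : (G.neighborSet (φ a)).ncard ≤ (A.neighborSet a).ncard) :
    φ '' A.neighborSet a = G.neighborSet (φ a) := by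
  refine Set.eq_of_subset_of_ncard_le ?_ ?_ hfin
  · rintro _ ⟨b, hb, rfl⟩
    exact φ.toHom.map_adj hb
  · exact hdeg.trans_eq (Set.ncard_image_of_injective _ φ.injective).symm

theorem nonempty_iso_of_copy_of_ncard_neighborSet_le [Nonempty W] (hG : G.Preconnected)
    (φ : Copy A G) (hfin : ∀ a, (G.neighborSet (φ a)).Finite)
    (hdeg : ∀ a, (G.neighborSet (φ a)).ncard ≤ (A.neighborSet a).ncard) :
    Nonempty (A ≃g G) := by
  have himage : ∀ a, φ '' A.neighborSet a = G.neighborSet (φ a) := fun a ↦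
    image_neighborSet_eq_of_ncard_le φ (hfin a) (hdeg a)
  have hsurj : Function.Surjective φ := by
    intro v
    by_contra hv
    obtain ⟨p⟩ := hG (φ (Classical.arbitrary W)) v
    obtain ⟨d, -, ⟨a, ha⟩, hd⟩ := p.exists_boundary_dart (Set.range φ) ⟨_, rfl⟩ hv
    have hsnd : d.snd ∈ G.neighborSet (φ a) := ha ▸ d.adj
    rw [← himage] at hsnd
    exact hd (Set.image_subset_range _ _ hsnd)
  refine ⟨⟨Equiv.ofBijective φ ⟨φ.injective, hsurj⟩, fun {a b} ↦ ?_⟩⟩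
  change φ b ∈ G.neighborSet (φ a) ↔ b ∈ A.neighborSet a
  rw [← himage]
  exact φ.injective.mem_set_image

end

/-! ### Cycles -/

theorem cycleGraph_adj_add_one {n : ℕ} (i : Fin (n + 2)) : (cycleGraph (n + 2)).Adj i (i + 1) := by
  simp [cycleGraph_adj]

theorem isNonbacktracking_cycleGraph (n : ℕ) :
    IsNonbacktracking (cycleGraph (n + 3)) (· + 1) where
  adj := cycleGraph_adj_add_one
  apply_apply_ne i := by
    simp [add_assoc, Fin.ext_iff, Fin.val_add, Nat.mod_eq_of_lt]

theorem ncard_neighborSet_cycleGraph {n : ℕ} (i : Fin (n + 3)) :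
    ((cycleGraph (n + 3)).neighborSet i).ncard = 2 := by
  rw [Set.ncard_eq_toFinset_card']
  exact cycleGraph_degree_three_le

theorem sp_le_one_of_iso_cycleGraph {G : SimpleGraph V} {n : ℕ} (e : cycleGraph (n + 2) ≃g G)
    (hn : Even (n + 2)) : sp G ≤ 1 := by
  have : Finite V := Finite.of_equiv _ e.toEquiv
  refine sp_le_one_of_injective_of_coloring (f := fun v ↦ e (e.symm v + 1)) (fun v ↦ ?_)
    (e.injective.comp ((add_left_injective 1).comp e.symm.injective))
    ((cycleGraph.bicoloring_of_even _ hn).comp e.symm.toHom)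
  simpa using e.map_adj_iff.2 (cycleGraph_adj_add_one (e.symm v))

/-- If `G` is a connected graph without isolated vertices with `sp(G) = Δ(G)`, then `G` is
either an odd cycle or a tree. -/
theorem sp_eq_maxDeg_implies_oddCycle_or_tree {V : Type*} [Fintype V] (G : SimpleGraph V)
    (hconn : G.Connected) (hG : ∀ v : V, ∃ w : V, G.Adj v w)
    (hsp : sp G = maxDeg G) :
    (∃ n : ℕ, Odd n ∧ 3 ≤ n ∧ Nonempty (G ≃g SimpleGraph.cycleGraph n)) ∨ G.IsTree := by
  by_cases hac : G.IsAcyclic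
  · exact Or.inr ⟨hconn, hac⟩
  obtain ⟨n, hn, ⟨φ⟩⟩ : ∃ n ≥ 3, cycleGraph n ⊑ G := by
    simpa [isAcyclic_iff_free_cycleGraph, Free] using hac
  obtain ⟨m, rfl⟩ := Nat.exists_eq_add_of_le' hn
  obtain ⟨f, hf⟩ :=
    exists_isNonbacktracking_of_copy hconn.preconnected φ (isNonbacktracking_cycleGraph m)
  have hΔ : maxDeg G ≤ 2 := not_lt.1 fun h ↦ (hf.sp_lt_maxDeg h).ne hsp
  obtain ⟨e⟩ : Nonempty (cycleGraph (m + 3) ≃g G) :=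
    nonempty_iso_of_copy_of_ncard_neighborSet_le hconn.preconnected φ
      (fun _ ↦ Set.toFinite _) fun i ↦ by
        rw [ncard_neighborSet_cycleGraph]
        exact (ncard_neighborSet_le_maxDeg G _).trans hΔ
  have hodd : Odd (m + 3) := Nat.not_even_iff_odd.1 fun heven ↦ by
    have := hconn.nonempty
    have hsp_le : sp G ≤ 1 := sp_le_one_of_iso_cycleGraph e heven
    have hΔ_ge : 2 ≤ maxDeg G := hf.two_le_maxDeg
    lia
  exact Or.inl ⟨m + 3, hodd, hn, ⟨e.symm⟩⟩
end

section
/- For any graph G without isolated vertices, sp(G) ≤ |V(G)| − 2·ν(G) + 1, where ν(G) is the number of edges in a maximum matching of G. -/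
/-!
A maximum matching `M` misses `|V| - 2ν(G)` vertices. One edge at each missed vertex turns `M` into
a spanning subgraph; give all of `M` a single color and every added edge a color of its own.
-/

open SimpleGraph

variable {V : Type*}

section EdgeColoring

variable {G : SimpleGraph V} {H K M : G.Subgraph} {k l : ℕ}

theorem sp_le (hspan : SpanningSub H) (hcol : EdgeColorable H k) : sp G ≤ k :=
  Nat.sInf_le ⟨H, hspan, hcol⟩

theorem edgeColorable_of_encard_edgeSet_le (h : H.edgeSet.encard ≤ k) : EdgeColorable H k := by
  have := (Set.finite_of_encard_le_coe h).to_subtype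
  have hcard : Nat.card H.edgeSet ≤ k := (Set.encard_le_coe_iff_finite_ncard_le.mp h).2
  let f : H.edgeSet ↪ Fin k := (Finite.equivFin _).toEmbedding.trans (Fin.castLEEmb hcard)
  exact ⟨f, fun _ _ hne _ => f.injective.ne hne⟩

theorem edgeColorable_one_of_isMatching (hM : M.IsMatching) : EdgeColorable M 1 := by
  refine ⟨fun _ => 0, ?_⟩
  rintro ⟨e₁, he₁⟩ ⟨e₂, he₂⟩ hne ⟨v, hv₁, hv₂⟩
  obtain ⟨a, rfl⟩ := Sym2.mem_iff_exists.mp hv₁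
  obtain ⟨b, rfl⟩ := Sym2.mem_iff_exists.mp hv₂
  obtain rfl : a = b := hM.eq_of_adj_left he₁ he₂
  exact absurd rfl hne

theorem EdgeColorable.sup (hH : EdgeColorable H k) (hK : EdgeColorable K l) :
    EdgeColorable (H ⊔ K) (k + l) := by
  classical
  obtain ⟨f, hf⟩ := hH
  obtain ⟨g, hg⟩ := hK
  have mem_K (e : (H ⊔ K).edgeSet) (he : (e : Sym2 V) ∉ H.edgeSet) : (e : Sym2 V) ∈ K.edgeSet :=
    (Subgraph.edgeSet_sup ▸ e.2 : (e : Sym2 V) ∈ H.edgeSet ∪ K.edgeSet).resolve_left he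
  refine ⟨fun e => finSumFinEquiv <|
    if he : (e : Sym2 V) ∈ H.edgeSet then .inl (f ⟨e, he⟩) else .inr (g ⟨e, mem_K e he⟩), ?_⟩
  intro e₁ e₂ hne hadj
  have hne' : (e₁ : Sym2 V) ≠ e₂ := Subtype.coe_ne_coe.mpr hne
  refine finSumFinEquiv.injective.ne ?_
  by_cases h₁ : (e₁ : Sym2 V) ∈ H.edgeSet <;> by_cases h₂ : (e₂ : Sym2 V) ∈ H.edgeSet
  · simpa [h₁, h₂] using hf ⟨e₁, h₁⟩ ⟨e₂, h₂⟩ (by simpa using hne') hadj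
  · simp [h₁, h₂]
  · simp [h₁, h₂]
  · simpa [h₁, h₂] using hg ⟨e₁, mem_K e₁ h₁⟩ ⟨e₂, mem_K e₂ h₂⟩ (by simpa using hne') hadj

end EdgeColoring

section Covering

variable {G : SimpleGraph V} {M : G.Subgraph}

theorem exists_subgraph_forall_mem_adj_encard_edgeSet_le {s : Set V}
    (hs : ∀ v ∈ s, ∃ w, G.Adj v w) :
    ∃ K : G.Subgraph, (∀ v ∈ s, ∃ w, K.Adj v w) ∧ K.edgeSet.encard ≤ s.encard := by
  choose! g hg using hs
  refine ⟨⨆ v : s, G.subgraphOfAdj (hg v v.2), fun v hv => ⟨g v, ?_⟩, ?_⟩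
  · exact Subgraph.iSup_adj.mpr ⟨⟨v, hv⟩, rfl⟩
  · have hedge : (⨆ v : s, G.subgraphOfAdj (hg v v.2)).edgeSet = (fun v => s(v, g v)) '' s := by
      ext e
      simp [eq_comm]
    exact hedge ▸ Set.encard_image_le _ s

theorem sp_le_add_one_of_isMatching {k : ℕ} (hM : M.IsMatching)
    (hk : M.vertsᶜ.encard ≤ k) (hG : ∀ v ∉ M.verts, ∃ w, G.Adj v w) : sp G ≤ k + 1 := by
  obtain ⟨K, hK, hcard⟩ := exists_subgraph_forall_mem_adj_encard_edgeSet_le (s := M.vertsᶜ) hG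
  have hspan : SpanningSub (K ⊔ M) := fun v => by
    by_cases hv : v ∈ M.verts
    · exact (hM hv).exists.imp fun _ => Or.inr
    · exact (hK v hv).imp fun _ => Or.inl
  exact sp_le hspan <| (edgeColorable_of_encard_edgeSet_le (hcard.trans hk)).sup
    (edgeColorable_one_of_isMatching hM)

end Covering

section MatchingNumber

variable (G : SimpleGraph V) {M : G.Subgraph}

theorem exists_isMatching_ncard_edgeSet_eq_matchNum [Finite G.edgeSet] :
    ∃ M : G.Subgraph, M.IsMatching ∧ M.edgeSet.ncard = matchNum G := by
  refine Nat.sSup_mem (s := {n | ∃ M : G.Subgraph, M.IsMatching ∧ M.edgeSet.ncard = n})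
    ⟨_, ⊥, fun v hv => hv.elim, rfl⟩ ⟨G.edgeSet.ncard, ?_⟩
  rintro _ ⟨M, -, rfl⟩
  exact Set.ncard_le_ncard M.edgeSet_subset

variable {G}

theorem two_mul_ncard_edgeSet_of_isMatching [Finite M.verts] (hM : M.IsMatching) :
    2 * M.edgeSet.ncard = M.verts.ncard := by
  classical
  have := Fintype.ofFinite M.verts
  have hdeg (v : M.verts) [Fintype (M.coe.neighborSet v)] : M.coe.degree v = 1 := by
    rw [M.coe_degree]
    exact Subgraph.degree_eq_one_iff_existsUnique_adj.mpr (hM v.2)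
  calc
    2 * M.edgeSet.ncard = 2 * M.coe.edgeSet.ncard := by
      rw [← M.image_coe_edgeSet_coe,
        Set.ncard_image_of_injective _ (Sym2.map.injective Subtype.val_injective)]
    _ = 2 * M.coe.edgeFinset.card := by rw [← coe_edgeFinset, Set.ncard_coe_finset]
    _ = ∑ _v : M.verts, 1 := by simp only [← M.coe.sum_degrees_eq_twice_card_edges, hdeg]
    _ = M.verts.ncard := by simp

end MatchingNumber

/-- For any graph without isolated vertices, `sp(G) ≤ |V(G)| - 2ν(G) + 1`. -/
theorem sp_le_card_sub_two_mul_nu_add_one {V : Type*} [Fintype V] (G : SimpleGraph V)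
    (hG : ∀ v : V, ∃ w : V, G.Adj v w) :
    sp G ≤ Fintype.card V - 2 * matchNum G + 1 := by
  obtain ⟨M, hM, hν⟩ := exists_isMatching_ncard_edgeSet_eq_matchNum G
  have hunmatched : M.vertsᶜ.ncard = Fintype.card V - 2 * matchNum G := by
    rw [Set.ncard_compl, Nat.card_eq_fintype_card, ← hν, two_mul_ncard_edgeSet_of_isMatching hM]
  exact sp_le_add_one_of_isMatching hM
    (Set.encard_le_coe_iff_finite_ncard_le.mpr ⟨Set.toFinite _, hunmatched.le⟩) fun v _ => hG v
end

section
/- For any graph G without isolated vertices, sp(G) ≤ 1 + ⌊Δ(G)/δ(G)⌋. -/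
/-!
Put `k = 1 + ⌊Δ/δ⌋`, so that `k ≥ 2` and `Δ ≤ k δ`. Counting the edges between a set `s` of vertices
and its neighborhood gives `|s| δ ≤ |N(s)| Δ`, so Hall's condition holds for the sets
`N(v) × {1, …, k}`: each vertex `v` can choose a neighbor `f v` and a color such that vertices with
the same `f`-value have different colors.

It remains to select arcs `v → f v` that cover all vertices and are properly `k`-colored. Repeatedly
select the arc `v → f v` of a leaf `v`, in its chosen color, and discard both of its ends; these
arcs meet only in heads. On the vertices that are left, `f` is surjective, and keeping one incoming
arc at each vertex leaves cycles and infinite paths. If `U` is a maximal set of vertices there such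
that no arc joins two of them, then the arcs whose heads lie outside `U` cover everything, and two
of them that follow each other have exactly one tail in `U`. So two colors suffice.
-/

open SimpleGraph

variable {V : Type*}

section MapArcs

variable {α : Type*} {f : V → V} {S T : Set V} {c d : V → α}

/-- A proper edge coloring of the arcs `v → f v` with `v ∈ S`, where `c v` is the color of the arc
starting at `v`: arcs in succession and arcs with the same head have different colors. -/
structure IsArcColoring (f : V → V) (S : Set V) (c : V → α) : Prop where
  ne_apply : ∀ v ∈ S, f v ∈ S → c v ≠ c (f v)
  injOn : S.InjOn fun v => (f v, c v)

namespace IsArcColoring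

theorem of_disjoint_image (hS : Disjoint S (f '' S)) (hinj : S.InjOn fun v => (f v, c v)) :
    IsArcColoring f S c where
  ne_apply _ hv hfv := absurd (Set.mem_image_of_mem f hv) (hS.notMem_of_mem_left hfv)
  injOn := hinj

theorem congr (h : IsArcColoring f S c) (hcd : S.EqOn c d) : IsArcColoring f S d where
  ne_apply v hv hfv := by
    rw [← hcd hv, ← hcd hfv]
    exact h.ne_apply v hv hfv
  injOn := h.injOn.congr fun _ hv => by simp only [hcd hv]

theorem union (hS : IsArcColoring f S c) (hT : IsArcColoring f T c)
    (hST : Disjoint (S ∪ f '' S) (T ∪ f '' T)) : IsArcColoring f (S ∪ T) c where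
  ne_apply := by
    rintro v (hv | hv) (hfv | hfv)
    · exact hS.ne_apply v hv hfv
    · exact absurd (.inl hfv) (hST.notMem_of_mem_left (.inr ⟨v, hv, rfl⟩))
    · exact absurd (.inr ⟨v, hv, rfl⟩) (hST.notMem_of_mem_left (.inl hfv))
    · exact hT.ne_apply v hv hfv
  injOn := by
    rw [Set.injOn_union (hST.mono Set.subset_union_left Set.subset_union_left)]
    refine ⟨hS.injOn, hT.injOn, fun v hv w hw h => ?_⟩
    exact hST.ne_of_mem (.inr ⟨v, hv, rfl⟩) (.inr ⟨w, hw, rfl⟩) (congrArg Prod.fst h)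

theorem ne_of_mem_of_mem (h : IsArcColoring f S c) {v w x : V} (hv : v ∈ S) (hw : w ∈ S)
    (hvw : v ≠ w) (hxv : x ∈ s(v, f v)) (hxw : x ∈ s(w, f w)) : c v ≠ c w := by
  rw [Sym2.mem_iff] at hxv hxw
  rcases hxv with rfl | rfl <;> rcases hxw with hxw | hxw
  · exact absurd hxw hvw
  · subst hxw
    exact (h.ne_apply w hw hv).symm
  · subst hxw
    exact h.ne_apply v hv hw
  · exact fun hc => hvw (h.injOn hv hw (Prod.ext hxw hc))

end IsArcColoring

/-- One round of stripping leaves from the arcs `v → f v`: if the arcs starting in `S` have been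
selected and their ends discarded, the new set consists of the `v` all of whose preimages are heads
of selected arcs. -/
def leafStep (f : V → V) : Set V →o Set V where
  toFun S := {v | f ⁻¹' {v} ⊆ f '' S}
  monotone' _ _ hST _ hv := hv.trans (Set.image_mono hST)

/-- The tails of all arcs selected when leaves are stripped for as long as possible. -/
def strippedLeaves (f : V → V) : Set V :=
  (leafStep f).lfp

theorem mem_strippedLeaves_iff {v : V} :
    v ∈ strippedLeaves f ↔ f ⁻¹' {v} ⊆ f '' strippedLeaves f :=
  Set.ext_iff.1 (leafStep f).map_lfp.symm v

theorem disjoint_strippedLeaves_image (f : V → V) :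
    Disjoint (strippedLeaves f) (f '' strippedLeaves f) := by
  suffices Disjoint (strippedLeaves f) (f '' (leafStep f).lfp) from this
  refine (leafStep f).lfp_induction (p := fun S => Disjoint S (f '' strippedLeaves f))
    (fun S hS _ => ?_) fun _ h => sSup_disjoint_iff.2 h
  rw [Set.disjoint_left]
  rintro _ hv ⟨w, hw, rfl⟩
  obtain ⟨x, hx, rfl⟩ := hv (show w ∈ f ⁻¹' {f w} from rfl)
  exact hS.notMem_of_mem_left hx (mem_strippedLeaves_iff.1 hw rfl)

theorem surjOn_compl_strippedLeaves (f : V → V) :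
    Set.SurjOn f (strippedLeaves f ∪ f '' strippedLeaves f)ᶜ
      (strippedLeaves f ∪ f '' strippedLeaves f)ᶜ := by
  intro v hv
  rw [Set.mem_compl_iff, Set.mem_union, not_or] at hv
  obtain ⟨hv, hv_image⟩ := hv
  rw [mem_strippedLeaves_iff, Set.not_subset] at hv
  obtain ⟨u, rfl, hu⟩ := hv
  exact ⟨u, fun h => h.elim (fun h => hv_image ⟨u, h, rfl⟩) hu, rfl⟩

theorem exists_maximal_subset_pairwise (r : V → V → Prop) (R : Set V) :
    ∃ U, Maximal (fun U => U ⊆ R ∧ U.Pairwise r) U :=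
  zorn_subset {U | U ⊆ R ∧ U.Pairwise r} fun C hC hchain =>
    ⟨⋃₀ C, ⟨Set.sUnion_subset fun _ hU => (hC hU).1,
      hchain.pairwise_sUnion.2 fun _ hU => (hC hU).2⟩, fun _ => Set.subset_sUnion_of_mem⟩

theorem exists_independent_dominating_subset {R : Set V} (hf : ∀ v ∈ R, f v ≠ v) :
    ∃ U ⊆ R, (∀ v ∈ U, f v ∉ U) ∧ ∀ v ∈ R, v ∉ U → f v ∈ U ∨ v ∈ f '' U := by
  obtain ⟨U, ⟨hUR, hU⟩, hmax⟩ := exists_maximal_subset_pairwise (fun u v => f u ≠ v) R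
  refine ⟨U, hUR, fun v hv hfv => hU hv hfv (hf v (hUR hv)).symm rfl, fun v hv hvU => ?_⟩
  by_contra! h
  refine hvU (hmax ⟨Set.insert_subset hv hUR, hU.insert fun u hu _ => ⟨?_, ?_⟩⟩
    (Set.subset_insert v U) (Set.mem_insert v U))
  · rintro rfl
    exact h.1 hu
  · rintro rfl
    exact h.2 ⟨u, hu, rfl⟩

theorem exists_isArcColoring_of_surjOn [Nontrivial α] {A : Set V} (hA : Set.SurjOn f A A)
    (hf : ∀ v ∈ A, f v ≠ v) :
    ∃ (T : Set V) (c : V → α), IsArcColoring f T c ∧ T ∪ f '' T = A := by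
  classical
  obtain ⟨R, hRA, hR⟩ := hA.exists_bijOn_subset
  obtain ⟨U, hUR, hindep, hdom⟩ :=
    exists_independent_dominating_subset fun v hv => hf v (hRA hv)
  obtain ⟨a, b, hab⟩ := exists_pair_ne α
  refine ⟨R \ f ⁻¹' U, fun v => if v ∈ U then a else b, ⟨?_, ?_⟩, ?_⟩
  · rintro v ⟨hvR, hfvU⟩ ⟨hfvR, hffvU⟩
    have hvU : v ∈ U := by
      obtain h | ⟨u, hu, huv⟩ := hdom (f v) hfvR hfvU
      · exact absurd h hffvU
      · rwa [← hR.injOn (hUR hu) hvR huv]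
    rw [Set.mem_preimage] at hfvU
    simpa only [if_pos hvU, if_neg hfvU] using hab
  · exact fun v hv w hw h => hR.injOn hv.1 hw.1 (congrArg Prod.fst h)
  · refine Set.Subset.antisymm (Set.union_subset (Set.sdiff_subset.trans hRA) ?_) fun v hv => ?_
    · exact (hR.mapsTo.mono_left Set.sdiff_subset).image_subset
    · by_cases hvU : v ∈ U
      · exact .inl ⟨hUR hvU, hindep v hvU⟩
      · obtain ⟨u, hu, rfl⟩ := hR.surjOn hv
        exact .inr ⟨u, ⟨hu, hvU⟩, rfl⟩

theorem exists_isArcColoring_union_image_eq_univ [Nontrivial α] (hf : ∀ v, f v ≠ v)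
    (hc : Function.Injective fun v => (f v, c v)) :
    ∃ (S : Set V) (d : V → α), IsArcColoring f S d ∧ S ∪ f '' S = Set.univ := by
  classical
  set L := strippedLeaves f
  obtain ⟨T, d, hd, hT⟩ :=
    exists_isArcColoring_of_surjOn (α := α) (surjOn_compl_strippedLeaves f) fun v _ => hf v
  have hLT : Disjoint (L ∪ f '' L) (T ∪ f '' T) := hT ▸ disjoint_compl_right
  have hL : IsArcColoring f L c :=
    .of_disjoint_image (disjoint_strippedLeaves_image f) hc.injOn
  refine ⟨L ∪ T, L.piecewise c d, .union (hL.congr (L.piecewise_eqOn c d).symm)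
    (hd.congr fun v hv => (L.piecewise_eq_of_notMem c d ?_).symm) hLT, ?_⟩
  · exact fun hvL => hLT.notMem_of_mem_left (.inl hvL) (.inl hv)
  · rw [Set.image_union, Set.union_union_union_comm, hT, Set.union_compl_self]

end MapArcs

section Hall

variable {G : SimpleGraph V} [G.LocallyFinite] {d D : ℕ}

theorem card_mul_le_card_biUnion_neighborFinset_mul [DecidableEq V] {s : Finset V}
    (hmin : ∀ v ∈ s, d ≤ G.degree v) (hmax : ∀ v, G.degree v ≤ D) :
    s.card * d ≤ (s.biUnion fun v => G.neighborFinset v).card * D := by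
  classical
  refine Finset.card_mul_le_card_mul G.Adj (fun v hv => ?_) fun w _ => ?_
  · refine (hmin v hv).trans (Finset.card_le_card fun w hw => ?_)
    exact (Finset.mem_bipartiteAbove G.Adj).2
      ⟨Finset.mem_biUnion.2 ⟨v, hv, hw⟩, (G.mem_neighborFinset v w).1 hw⟩
  · refine (Finset.card_le_card fun v hv => ?_).trans (hmax w)
    exact (G.mem_neighborFinset w v).2 ((Finset.mem_bipartiteBelow G.Adj).1 hv).2.symm

theorem exists_adj_injective_prod {κ : Type*} [Fintype κ] (hd : 0 < d)
    (hmin : ∀ v, d ≤ G.degree v) (hmax : ∀ v, G.degree v ≤ D) (hD : D ≤ Fintype.card κ * d) :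
    ∃ (f : V → V) (c : V → κ),
      (∀ v, G.Adj v (f v)) ∧ Function.Injective fun v => (f v, c v) := by
  classical
  let t (v : V) : Finset (V × κ) := G.neighborFinset v ×ˢ Finset.univ
  have hall (s : Finset V) : s.card ≤ (s.biUnion t).card := by
    set N := s.biUnion fun v => G.neighborFinset v
    have ht : s.biUnion t = N ×ˢ Finset.univ := by
      ext ⟨w, a⟩
      simp [t, N]
    rw [ht, Finset.card_product, Finset.card_univ]
    refine Nat.le_of_mul_le_mul_right ?_ hd
    calc
      s.card * d ≤ N.card * D :=
        card_mul_le_card_biUnion_neighborFinset_mul (fun v _ => hmin v) hmax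
      _ ≤ N.card * (Fintype.card κ * d) := Nat.mul_le_mul_left _ hD
      _ = N.card * Fintype.card κ * d := (mul_assoc _ _ _).symm
  obtain ⟨g, hg, hgt⟩ := (Finset.all_card_le_biUnion_card_iff_exists_injective t).1 hall
  refine ⟨fun v => (g v).1, fun v => (g v).2, fun v => ?_, hg⟩
  exact (G.mem_neighborFinset v _).1 (Finset.mem_product.1 (hgt v)).1

end Hall

section ArcSubgraph

variable {G : SimpleGraph V} {f : V → V} {S : Set V}

/-- The subgraph on all vertices whose edges are the arcs `v → f v` with `v ∈ S`, without their
direction. -/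
def arcSubgraph (hf : ∀ v, G.Adj v (f v)) (S : Set V) : G.Subgraph where
  verts := Set.univ
  Adj v w := (v ∈ S ∧ f v = w) ∨ (w ∈ S ∧ f w = v)
  adj_sub := by
    rintro v w (⟨-, rfl⟩ | ⟨-, rfl⟩)
    exacts [hf v, (hf w).symm]
  edge_vert _ := Set.mem_univ _
  symm := ⟨fun _ _ => Or.symm⟩

theorem exists_eq_of_mem_edgeSet_arcSubgraph {hf : ∀ v, G.Adj v (f v)} {e : Sym2 V}
    (he : e ∈ (arcSubgraph hf S).edgeSet) : ∃ v ∈ S, e = s(v, f v) := by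
  induction e with
  | _ v w =>
    obtain ⟨hv, rfl⟩ | ⟨hw, rfl⟩ := Subgraph.mem_edgeSet.1 he
    · exact ⟨v, hv, rfl⟩
    · exact ⟨w, hw, Sym2.eq_swap⟩

theorem spanningSub_arcSubgraph (hf : ∀ v, G.Adj v (f v)) (hS : S ∪ f '' S = Set.univ) :
    SpanningSub (arcSubgraph hf S) := by
  intro v
  obtain hv | ⟨u, hu, huv⟩ := hS.ge (Set.mem_univ v)
  · exact ⟨f v, .inl ⟨hv, rfl⟩⟩
  · exact ⟨u, .inr ⟨hu, huv⟩⟩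

theorem IsArcColoring.edgeColorable {k : ℕ} {c : V → Fin k} (hc : IsArcColoring f S c)
    (hf : ∀ v, G.Adj v (f v)) : EdgeColorable (arcSubgraph hf S) k := by
  choose tail htail heq using fun e : (arcSubgraph hf S).edgeSet =>
    exists_eq_of_mem_edgeSet_arcSubgraph e.2
  refine ⟨fun e => c (tail e), fun e₁ e₂ hne ⟨x, hx₁, hx₂⟩ => ?_⟩
  have htail_ne : tail e₁ ≠ tail e₂ := fun h => hne (Subtype.ext (by rw [heq e₁, heq e₂, h]))
  rw [heq] at hx₁ hx₂
  exact hc.ne_of_mem_of_mem (htail e₁) (htail e₂) htail_ne hx₁ hx₂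

end ArcSubgraph

theorem exists_spanningSub_edgeColorable {G : SimpleGraph V} [G.LocallyFinite] {d D k : ℕ}
    (hd : 0 < d) (hmin : ∀ v, d ≤ G.degree v) (hmax : ∀ v, G.degree v ≤ D) (hk : 2 ≤ k)
    (hD : D ≤ k * d) : ∃ H : G.Subgraph, SpanningSub H ∧ EdgeColorable H k := by
  have : Nontrivial (Fin k) := Fin.nontrivial_iff_two_le.2 hk
  obtain ⟨f, c, hf, hinj⟩ :=
    exists_adj_injective_prod (κ := Fin k) hd hmin hmax (by rwa [Fintype.card_fin])
  obtain ⟨S, c', hc', hS⟩ :=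
    exists_isArcColoring_union_image_eq_univ (fun v => (hf v).ne') hinj
  exact ⟨arcSubgraph hf S, spanningSub_arcSubgraph hf hS, hc'.edgeColorable hf⟩

section ExtremeDegrees

variable {G : SimpleGraph V} [G.LocallyFinite]

theorem ncard_neighborSet (v : V) : (G.neighborSet v).ncard = G.degree v :=
  Set.ncard_eq_toFinset_card' _

theorem minDeg_le_degree (v : V) : minDeg G ≤ G.degree v :=
  Nat.sInf_le ⟨v, ncard_neighborSet v⟩

theorem degree_le_maxDeg (hbdd : BddAbove (Set.range fun v : V => (G.neighborSet v).ncard))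
    (v : V) : G.degree v ≤ maxDeg G :=
  le_csSup hbdd ⟨v, ncard_neighborSet v⟩

theorem minDeg_pos [Nonempty V] (hG : ∀ v : V, ∃ w : V, G.Adj v w) : 0 < minDeg G := by
  obtain ⟨v, hv : (G.neighborSet v).ncard = minDeg G⟩ :=
    Nat.sInf_mem (Set.range_nonempty fun v : V => (G.neighborSet v).ncard)
  rw [← hv, ncard_neighborSet]
  exact (G.degree_pos_iff_exists_adj v).2 (hG v)

end ExtremeDegrees

theorem sp_eq_zero_of_isEmpty [IsEmpty V] (G : SimpleGraph V) : sp G = 0 :=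
  Nat.sInf_eq_zero.2 (.inl ⟨⊥, isEmptyElim, isEmptyElim, fun _ _ _ ⟨v, _⟩ => isEmptyElim v⟩)

theorem sp_le_one_add_ratio_floor_general {V : Type*} (G : SimpleGraph V)
    (hG : ∀ v : V, ∃ w : V, G.Adj v w) (hfin : ∀ v : V, (G.neighborSet v).Finite)
    (hbdd : BddAbove (Set.range fun v : V => (G.neighborSet v).ncard)) :
    sp G ≤ 1 + maxDeg G / minDeg G := by
  have : G.LocallyFinite := fun v => (hfin v).fintype
  obtain _ | ⟨⟨v⟩⟩ := isEmpty_or_nonempty V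
  · simp only [sp_eq_zero_of_isEmpty, zero_le]
  have : Nonempty V := ⟨v⟩
  have hmin : ∀ v, minDeg G ≤ G.degree v := minDeg_le_degree
  have hmax : ∀ v, G.degree v ≤ maxDeg G := degree_le_maxDeg hbdd
  have hpos : 0 < minDeg G := minDeg_pos hG
  have hratio : 0 < maxDeg G / minDeg G := Nat.div_pos ((hmin v).trans (hmax v)) hpos
  have hle : maxDeg G ≤ (1 + maxDeg G / minDeg G) * minDeg G := by
    rw [add_comm]
    exact (Nat.lt_mul_of_div_lt (Nat.lt_succ_self _) hpos).le
  exact Nat.sInf_le (exists_spanningSub_edgeColorable hpos hmin hmax (by lia) hle)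

/-- For any graph without isolated vertices, `sp(G) ≤ 1 + ⌊Δ(G)/δ(G)⌋`. -/
theorem sp_le_one_add_ratio_floor {V : Type*} [Fintype V] (G : SimpleGraph V)
    (hG : ∀ v : V, ∃ w : V, G.Adj v w) :
    sp G ≤ 1 + maxDeg G / minDeg G := by
  exact sp_le_one_add_ratio_floor_general G hG (fun _ => Set.toFinite _)
    (Set.finite_range _).bddAbove
end
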